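/- arXiv:1708.07250 — 4 statements merged into one kernel-verified Lean document; each statement's English description precedes it below -/
import Mathlib

section
/- Let R : 2^{<ω} → 𝕊 be a function into Sacks conditions such that (1) for all s₁, s₂ ∈ 2^{<ω}, if s₁ is an initial segment of s₂ then R(s₂) ⊆ R(s₁), and (2) for every s ∈ 2^{<ω}, Stem(R(s⌢0)) and Stem(R(s⌢1)) are incomparable nodes. For each n ∈ ω let p_n := ⋃{R(s) : s ∈ 2^n}. Then each p_n is a Sacks condition, p_0 = R(∅), p_0 ⊇ p_1, and for every n ≥ 1 one has p_n ≥_{n-1} p_{n+1}; in particular R(∅) = p_0 ≥ p_1 ≥_0 p_2 ≥_1 p_3 ≥_2 ⋯ is a fusion sequence. -/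
/-- A perfect tree (Sacks condition): a nonempty subset of `2^{<ω}` closed under
initial segments such that every node has two incomparable extensions in the tree. -/
def PerfectTree (p : Set (List Bool)) : Prop :=
  p.Nonempty ∧ (∀ s ∈ p, ∀ t : List Bool, t <+: s → t ∈ p) ∧
    ∀ t ∈ p, ∃ t₁ ∈ p, ∃ t₂ ∈ p, t <+: t₁ ∧ t <+: t₂ ∧ ¬ t₁ <+: t₂ ∧ ¬ t₂ <+: t₁

/-- A branching node of `p`: a node of `p` having at least two immediate successors in `p`. -/
def BranchNode (p : Set (List Bool)) (t : List Bool) : Prop :=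
  t ∈ p ∧ t ++ [false] ∈ p ∧ t ++ [true] ∈ p

/-- `t` is a `k`-th branching node of `p`: it is a branching node and exactly `k`
branching nodes of `p` are proper initial segments of `t`.  In particular the stem
of `p` is the unique `0`-th branching node of `p`. -/
def NthBranchNode (p : Set (List Bool)) (k : ℕ) (t : List Bool) : Prop :=
  BranchNode p t ∧ {s | BranchNode p s ∧ s <+: t ∧ s ≠ t}.ncard = k

/-- `q ≤ₙ p` for Sacks conditions: `q ≤ p` and every `k`-th branching node of `p`
with `k ≤ n` belongs to `q` and is a branching node of `q`. -/
def LeqN (n : ℕ) (q p : Set (List Bool)) : Prop :=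
  q ⊆ p ∧ ∀ k ≤ n, ∀ t : List Bool, NthBranchNode p k t → t ∈ q ∧ BranchNode q t

theorem fh_split : ∀ x t : List Bool, ¬ x <+: t → ¬ t <+: x →
    ∃ c a, c ++ [a] <+: x ∧ c ++ [!a] <+: t
  | [], t, h, _ => absurd (List.nil_prefix) h
  | x :: xs, [], _, h => absurd (List.nil_prefix) h
  | x :: xs, t :: ts, h1, h2 => by
    by_cases hx : x = t
    · subst hx
      rw [List.cons_prefix_cons] at h1 h2
      obtain ⟨c, a, h3, h4⟩ := fh_split xs ts (by tauto) (by tauto)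
      exact ⟨x :: c, a, by simpa using h3, by simpa using h4⟩
    · refine ⟨[], x, by simp, ?_⟩
      have : t = !x := by cases x <;> cases t <;> simp_all
      simp [this]

theorem fh_nosplit {c y : List Bool} {a : Bool} (h1 : c ++ [a] <+: y) (h2 : c ++ [!a] <+: y) :
    False := by
  have h := (List.prefix_of_prefix_length_le h1 h2 (by simp)).eq_of_length (by simp)
  simp at h

theorem fh_branch {p : Set (List Bool)} (hc : ∀ s ∈ p, ∀ t : List Bool, t <+: s → t ∈ p)
    {c x y : List Bool} {a : Bool} (hx : x ∈ p) (hy : y ∈ p)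
    (h1 : c ++ [a] <+: x) (h2 : c ++ [!a] <+: y) : BranchNode p c := by
  have h1' := hc _ hx _ h1
  have h2' := hc _ hy _ h2
  have h0 := hc _ h1' c (List.prefix_append _ _)
  cases a
  · exact ⟨h0, h1', h2'⟩
  · exact ⟨h0, h2', h1'⟩

theorem fh_fin (p : Set (List Bool)) (t : List Bool) :
    {s | BranchNode p s ∧ s <+: t ∧ s ≠ t}.Finite := by
  apply (List.finite_toSet t.inits).subset
  intro s hs
  simpa using hs.2.1

theorem fh_stem_min {p : Set (List Bool)} {t s : List Bool} (h : NthBranchNode p 0 t)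
    (hs : BranchNode p s) (hst : s <+: t) : s = t := by
  by_contra hne
  have := (Set.ncard_eq_zero (fh_fin p t)).1 h.2
  have h' : s ∈ {s | BranchNode p s ∧ s <+: t ∧ s ≠ t} := ⟨hs, hst, hne⟩
  rw [this] at h'
  exact h'

theorem fh_stem_comp {p : Set (List Bool)} (hp : PerfectTree p) {t x : List Bool}
    (h : NthBranchNode p 0 t) (hx : x ∈ p) : x <+: t ∨ t <+: x := by
  by_contra hcon
  push Not at hcon
  obtain ⟨c, a, h1, h2⟩ := fh_split x t hcon.1 hcon.2
  have hb := fh_branch hp.2.1 hx h.1.1 h1 h2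
  have hc : c = t := fh_stem_min h hb ((List.prefix_append _ _).trans h2)
  subst hc
  have := h2.length_le
  simp at this

theorem fh_stem_exists {p : Set (List Bool)} (hp : PerfectTree p) :
    ∃ t, NthBranchNode p 0 t := by
  classical
  obtain ⟨r, hr⟩ := hp.1
  obtain ⟨t₁, h1, t₂, h2, -, -, h3, h4⟩ := hp.2.2 r hr
  obtain ⟨c, a, h5, h6⟩ := fh_split t₁ t₂ h3 h4
  have hb := fh_branch hp.2.1 h1 h2 h5 h6
  have hex : ∃ n, ∃ t, BranchNode p t ∧ t.length = n := ⟨_, c, hb, rfl⟩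
  obtain ⟨t, ht, hlen⟩ := Nat.find_spec hex
  refine ⟨t, ht, ?_⟩
  rw [Set.ncard_eq_zero (fh_fin p t)]
  ext s
  simp only [Set.mem_setOf_eq, Set.mem_empty_iff_false, iff_false]
  rintro ⟨hs, hst, hne⟩
  have hle := Nat.find_min' hex ⟨s, hs, rfl⟩
  exact hne (hst.eq_of_length (le_antisymm hst.length_le (by omega)))

theorem fh_stem_mono {p q : Set (List Bool)} (hp : PerfectTree p) (hqp : q ⊆ p)
    {t u : List Bool} (ht : NthBranchNode p 0 t) (hu : NthBranchNode q 0 u) : t <+: u := by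
  have hub : BranchNode p u := ⟨hqp hu.1.1, hqp hu.1.2.1, hqp hu.1.2.2⟩
  rcases fh_stem_comp hp ht hub.1 with h | h
  · rw [fh_stem_min ht hub h]
  · exact h

theorem fh_closed {R : List Bool → Set (List Bool)}
    (hR : ∀ s, PerfectTree (R s)) {P : ℕ → Set (List Bool)}
    (hP : ∀ n x, x ∈ P n ↔ ∃ s : List Bool, s.length = n ∧ x ∈ R s) (n : ℕ) :
    ∀ s ∈ P n, ∀ t : List Bool, t <+: s → t ∈ P n := by
  intro x hx t ht
  obtain ⟨s, hs, hxs⟩ := (hP n x).1 hx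
  exact (hP n t).2 ⟨s, hs, (hR s).2.1 x hxs t ht⟩

theorem fh_stem_mem {R : List Bool → Set (List Bool)}
    (hR : ∀ s, PerfectTree (R s))
    (hmono : ∀ s₁ s₂ : List Bool, s₁ <+: s₂ → R s₂ ⊆ R s₁) {P : ℕ → Set (List Bool)}
    (hP : ∀ n x, x ∈ P n ↔ ∃ s : List Bool, s.length = n ∧ x ∈ R s) {n : ℕ}
    {s t : List Bool} (hs : s.length ≤ n) (ht : NthBranchNode (R s) 0 t) : t ∈ P n := by
  let w := s ++ List.replicate (n - s.length) false
  obtain ⟨u, hu⟩ := fh_stem_exists (hR w)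
  have h := fh_stem_mono (hR s) (hmono s w (List.prefix_append _ _)) ht hu
  exact (hP n t).2 ⟨w, by simp [w]; omega, (hR w).2.1 u hu.1.1 t h⟩

theorem fh_count {R : List Bool → Set (List Bool)}
    (hR : ∀ s, PerfectTree (R s))
    (hmono : ∀ s₁ s₂ : List Bool, s₁ <+: s₂ → R s₂ ⊆ R s₁)
    (hstem : ∀ s t₀ t₁ : List Bool, NthBranchNode (R (s ++ [false])) 0 t₀ →
      NthBranchNode (R (s ++ [true])) 0 t₁ → ¬ t₀ <+: t₁ ∧ ¬ t₁ <+: t₀)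
    {P : ℕ → Set (List Bool)}
    (hP : ∀ n x, x ∈ P n ↔ ∃ s : List Bool, s.length = n ∧ x ∈ R s) (n : ℕ)
    (s : List Bool) : ∀ t, s.length ≤ n → NthBranchNode (R s) 0 t →
      s.length ≤ {u | BranchNode (P n) u ∧ u <+: t ∧ u ≠ t}.ncard := by
  induction s using List.reverseRecOn with
  | nil => intros; simp
  | append_singleton s i ih =>
    intro t hn ht
    simp only [List.length_append, List.length_singleton] at hn ⊢
    obtain ⟨r, hr⟩ := fh_stem_exists (hR s)
    have hih := ih r (by omega) hr
    obtain ⟨x, hx⟩ := fh_stem_exists (hR (s ++ [false]))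
    obtain ⟨y, hy⟩ := fh_stem_exists (hR (s ++ [true]))
    obtain ⟨hxy, hyx⟩ := hstem s x y hx hy
    obtain ⟨c, a, h1, h2⟩ := fh_split x y hxy hyx
    have hb : BranchNode (P n) c := fh_branch (fh_closed hR hP n)
      (fh_stem_mem hR hmono hP (by simpa using hn) hx)
      (fh_stem_mem hR hmono hP (by simpa using hn) hy) h1 h2
    have hrx := fh_stem_mono (hR s) (hmono s _ (List.prefix_append _ _)) hr hx
    have hry := fh_stem_mono (hR s) (hmono s _ (List.prefix_append _ _)) hr hy
    have hrt := fh_stem_mono (hR s) (hmono s _ (List.prefix_append _ _)) hr ht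
    have hrc : r <+: c := by
      by_cases hl : r.length ≤ c.length
      · exact List.prefix_of_prefix_length_le hrx ((List.prefix_append _ _).trans h1) hl
      · have h3 : c ++ [a] <+: r := List.prefix_of_prefix_length_le h1 hrx (by simp; omega)
        exact (fh_nosplit (h3.trans hry) h2).elim
    have hct : ∃ b, c ++ [b] <+: t := by
      cases i
      · exact ⟨a, h1.trans (fh_stem_mono (hR _) subset_rfl hx ht)⟩
      · exact ⟨!a, h2.trans (fh_stem_mono (hR _) subset_rfl hy ht)⟩
    obtain ⟨b, hct⟩ := hct
    have hlt := hct.length_le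
    simp only [List.length_append, List.length_singleton] at hlt
    have hnot : c ∉ {u | BranchNode (P n) u ∧ u <+: r ∧ u ≠ r} := by
      rintro ⟨-, h3, h4⟩
      exact h4 (h3.eq_of_length (le_antisymm h3.length_le hrc.length_le))
    have hcard := Set.ncard_insert_of_notMem hnot (fh_fin (P n) r)
    have hsub : insert c {u | BranchNode (P n) u ∧ u <+: r ∧ u ≠ r} ⊆
        {u | BranchNode (P n) u ∧ u <+: t ∧ u ≠ t} := by
      rintro u (rfl | ⟨h3, h4, h5⟩)
      · exact ⟨hb, (List.prefix_append _ _).trans hct, by rintro rfl; omega⟩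
      · refine ⟨h3, h4.trans hrt, ?_⟩
        rintro rfl
        have := h4.length_le
        have := hrc.length_le
        omega
    have := Set.ncard_le_ncard hsub (fh_fin (P n) t)
    omega


/-- Fusion Helper Lemma: if `R : 2^{<ω} → 𝕊` is monotone (extension of the index gives
a stronger condition) and the stems of `R(s⌢0)` and `R(s⌢1)` are incomparable, then
setting `P n = ⋃ {R(s) : s ∈ 2^n}`, each `P n` is a Sacks condition,
`P 0 = R ∅ ⊇ P 1`, and `P (n+1) ≤_{n-1} P n` for every `n ≥ 1`,
i.e. `R(∅) = P 0 ≥ P 1 ≥₀ P 2 ≥₁ P 3 ≥₂ ⋯` is a fusion sequence. -/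
theorem fusion_helper (R : List Bool → Set (List Bool))
    (hR : ∀ s, PerfectTree (R s))
    (hmono : ∀ s₁ s₂ : List Bool, s₁ <+: s₂ → R s₂ ⊆ R s₁)
    (hstem : ∀ s t₀ t₁ : List Bool, NthBranchNode (R (s ++ [false])) 0 t₀ →
      NthBranchNode (R (s ++ [true])) 0 t₁ → ¬ t₀ <+: t₁ ∧ ¬ t₁ <+: t₀)
    (P : ℕ → Set (List Bool))
    (hP : ∀ n, P n = ⋃ s ∈ {s : List Bool | s.length = n}, R s) :
    (∀ n, PerfectTree (P n)) ∧ P 0 = R [] ∧ P 1 ⊆ P 0 ∧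
      ∀ n, 1 ≤ n → LeqN (n - 1) (P (n + 1)) (P n) := by

  have hP' : ∀ n x, x ∈ P n ↔ ∃ s : List Bool, s.length = n ∧ x ∈ R s := by
    intro n x
    rw [hP n]
    simp
  have hsub : ∀ n, P (n + 1) ⊆ P n := by
    intro n x hx
    obtain ⟨s, hs, hxs⟩ := (hP' _ x).1 hx
    exact (hP' _ x).2 ⟨s.take n, by simp; omega, hmono _ _ (List.take_prefix _ _) hxs⟩
  refine ⟨?_, ?_, hsub 0, ?_⟩
  · intro n
    refine ⟨?_, fh_closed hR hP' n, ?_⟩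
    · obtain ⟨x, hx⟩ := (hR (List.replicate n false)).1
      exact ⟨x, (hP' n x).2 ⟨_, by simp, hx⟩⟩
    · intro t ht
      obtain ⟨s, hs, hts⟩ := (hP' n t).1 ht
      obtain ⟨t₁, h1, t₂, h2, h3⟩ := (hR s).2.2 t hts
      exact ⟨t₁, (hP' n _).2 ⟨s, hs, h1⟩, t₂, (hP' n _).2 ⟨s, hs, h2⟩, h3⟩
  · ext x
    rw [hP']
    simp
  · intro n hn
    refine ⟨hsub n, ?_⟩
    intro k hk t ht
    have key : ∀ b, t ++ [b] ∈ P n → t ++ [b] ∈ P (n + 1) := by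
      intro b hb
      obtain ⟨s, hs, hts⟩ := (hP' n _).1 hb
      obtain ⟨r, hr⟩ := fh_stem_exists (hR s)
      have hrP : r ∈ P (n + 1) := fh_stem_mem hR hmono hP' (by omega) hr
      by_cases hpre : t ++ [b] <+: r
      · exact fh_closed hR hP' (n + 1) r hrP _ hpre
      · exfalso
        have hrt := (fh_stem_comp (hR s) hr hts).resolve_left hpre
        have hrt' : r <+: t := by
          rcases List.prefix_concat_iff.1 hrt with h | h
          · exact (hpre (h ▸ List.prefix_rfl)).elim
          · exact h
        have hc := fh_count hR hmono hstem hP' n s r hs.le hr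
        have hss : {u | BranchNode (P n) u ∧ u <+: r ∧ u ≠ r} ⊆
            {u | BranchNode (P n) u ∧ u <+: t ∧ u ≠ t} := by
          rintro u ⟨h3, h4, h5⟩
          refine ⟨h3, h4.trans hrt', ?_⟩
          rintro rfl
          exact h5 (h4.eq_of_length (le_antisymm h4.length_le hrt'.length_le))
        have h6 := Set.ncard_le_ncard hss (fh_fin (P n) t)
        have h7 := ht.2
        omega
    have hf := key false ht.1.2.1
    have htt := key true ht.1.2.2
    have h0 := fh_closed hR hP' (n + 1) _ hf t (List.prefix_append _ _)
    exact ⟨h0, h0, hf, htt⟩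
end

section
/- Let X = ⟨x_n : n ∈ ω⟩ be a sequence of elements of ω^ω and let ⟨T_n : n ∈ ω⟩ be a sequence of trees T_n ⊆ ω^{<ω} satisfying: (1) x_n ∈ [T_n] for every n; and (2) for all n₁, n₂ ∈ ω, either x_{n₁} = x_{n₂} or [T_{n₁}] ∩ [T_{n₂}] = ∅. Define g : ω^ω → ω^ω by g(x)(n) := max{Exit(T_n)(x), n}. Then for every x ∈ ω^ω, f_X(x) ≤* g(x). -/
/-- The initial segment `x ↾ l` of `x ∈ ω^ω`, as an element of `ω^{<ω}`. -/
def seg (x : ℕ → ℕ) (l : ℕ) : List ℕ := (List.range l).map x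

/-- A tree: a set of finite sequences of naturals closed under initial segments. -/
def IsTree (T : Set (List ℕ)) : Prop := ∀ s ∈ T, ∀ t : List ℕ, t <+: s → t ∈ T

/-- `[T]`: the set of infinite paths through `T`, i.e. those `x ∈ ω^ω` all of whose
finite initial segments belong to `T`. -/
def Branches (T : Set (List ℕ)) : Set (ℕ → ℕ) := {x | ∀ l, seg x l ∈ T}

/-- A tree is leafless if every element has a proper extension in the tree. -/
def Leafless (T : Set (List ℕ)) : Prop := ∀ t ∈ T, ∃ n : ℕ, t ++ [n] ∈ T

/-- `T` obeys `f` iff for each level `l`, the set of `n` such that `t⌢n ∈ T` for some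
`t ∈ T` of length `l` has size at most `f l`. -/
def Obeys (T : Set (List ℕ)) (f : ℕ → ℕ) : Prop :=
  ∀ l : ℕ, ∃ S : Finset ℕ, S.card ≤ f l ∧
    ∀ n : ℕ, (∃ t ∈ T, t.length = l ∧ t ++ [n] ∈ T) → n ∈ S

/-- `Exit(T)(x)`: the least `l` with `x ↾ l ∉ T` if `x ∉ [T]`, and `0` if `x ∈ [T]`
(in which case the set below is empty and `sInf ∅ = 0`). -/
noncomputable def exitLevel (T : Set (List ℕ)) (x : ℕ → ℕ) : ℕ := sInf {l | seg x l ∉ T}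

/-- `f_X(x)(n)`: the least `l` with `x l ≠ x_n l` if `x ≠ x_n`, and `0` otherwise
(in which case the set below is empty and `sInf ∅ = 0`). -/
noncomputable def fSeq (X : ℕ → ℕ → ℕ) (x : ℕ → ℕ) (n : ℕ) : ℕ := sInf {l | x l ≠ X n l}

/-- Proposition (tree avoidance): if `x_n ∈ [T_n]` for every `n` and for all `n₁, n₂`
either `x_{n₁} = x_{n₂}` or `[T_{n₁}] ∩ [T_{n₂}] = ∅`, then the function
`g(x)(n) = max(Exit(T_n)(x), n)` pointwise eventually dominates `f_X`. -/
theorem tree_avoid (X : ℕ → ℕ → ℕ) (T : ℕ → Set (List ℕ))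
    (htree : ∀ n, IsTree (T n))
    (hmem : ∀ n, X n ∈ Branches (T n))
    (hsep : ∀ n₁ n₂ : ℕ, X n₁ = X n₂ ∨ Branches (T n₁) ∩ Branches (T n₂) = ∅)
    (g : (ℕ → ℕ) → ℕ → ℕ)
    (hg : ∀ x n, g x n = max (exitLevel (T n) x) n) :
    ∀ x : ℕ → ℕ, ∀ᶠ n in Filter.atTop, fSeq X x n ≤ g x n := by
  intro x
  have key : ∀ n, x ∉ Branches (T n) → fSeq X x n ≤ g x n := by
    intro n hn
    rw [hg]
    refine le_trans ?_ (le_max_left _ _)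
    have hne : {l | seg x l ∉ T n}.Nonempty := by
      by_contra h
      apply hn
      intro l
      by_contra hl
      exact h ⟨l, hl⟩
    have hL : seg x (exitLevel (T n) x) ∉ T n := Nat.sInf_mem hne
    by_contra hlt
    push Not at hlt
    apply hL
    have heq : seg x (exitLevel (T n) x) = seg (X n) (exitLevel (T n) x) := by
      unfold seg
      apply List.map_congr_left
      intro l hl
      rw [List.mem_range] at hl
      by_contra hd
      have h1 : fSeq X x n ≤ l := Nat.sInf_le hd
      omega
    rw [heq]
    exact hmem n _
  by_cases h : ∃ m, x ∈ Branches (T m)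
  · obtain ⟨m, hm⟩ := h
    filter_upwards [Filter.eventually_ge_atTop (fSeq X x m)] with n hn
    by_cases hx : x ∈ Branches (T n)
    · rcases hsep n m with h1 | h1
      · have h2 : fSeq X x n = fSeq X x m := by
          unfold fSeq
          rw [h1]
        rw [hg, h2]
        exact le_trans hn (le_max_right _ _)
      · have h2 : x ∈ Branches (T n) ∩ Branches (T m) := ⟨hx, hm⟩
        rw [h1] at h2
        exact h2.elim
    · exact key n hx
  · exact Filter.Eventually.of_forall fun n => key n fun hx => h ⟨n, hx⟩
end

section
/- Let X = ⟨x_n : n ∈ ω⟩ be a sequence of elements of ω^ω and let W = (F, I) be a shrink wrapper for X. For each n ∈ ω let T_n := ⋂{⋃_{s ∈ 2^ñ} F_{ñ,n}(s) : ñ ∈ ω and n ∈ η(ñ)}. Let e : ω → ω be any function such that for all n₁ < n₂ with {n₁, n₂} = η(ñ) and all s₁, s₂ ∈ 2^ñ with [F_{ñ,n₁}(s₁)] ∩ [F_{ñ,n₂}(s₂)] = ∅, every y₁ ∈ [F_{ñ,n₁}(s₁)] and y₂ ∈ [F_{ñ,n₂}(s₂)] differ at some coordinate below e(n₂). Define g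 : ω^ω → ω^ω by g(x)(n) := max{Exit(T_n)(x), e(n), n}. Then for every x ∈ ω^ω, f_X(x) ≤* g(x). -/
/-- A shrink wrapper `(F, I)` for a sequence `X = ⟨x_n : n ∈ ω⟩` of elements of `ω^ω`,
relative to the fixed bijection `η : ω → [ω]²`, the family `f_i` (with `(i,l) ↦ f_i l`
finite-to-one) and the finite-to-one function `Φ : 2^{<ω} × ω → ω`:
(1) for `n ∈ η nn` and `s ∈ 2^nn`, `F nn n s` is a leafless tree obeying `f_{Φ(s,n)}`;
(2) for each `nn` and `n ∈ η nn` there is `s ∈ 2^nn` with `x_n ∈ [F nn n s]`;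
(3) for `{n₁, n₂} = η nn` and `s₁, s₂ ∈ 2^nn`, writing `C₁ = [F nn n₁ s₁]`,
`C₂ = [F nn n₂ s₂]`, one of:
(3a) `C₁ = C₂` and if `x_{n₁} ∈ C₁` or `x_{n₂} ∈ C₂` then `x_{n₁} = x_{n₂}`;
(3b) there is `x ∈ I n₁ ∩ I n₂` with `C₁ = C₂ = {x}`;
(3c) `C₁ ∩ C₂ = ∅`. -/
def ShrinkWrapper (η : ℕ → Finset ℕ) (f : ℕ → ℕ → ℕ) (Φ : List Bool → ℕ → ℕ)
    (X : ℕ → ℕ → ℕ) (F : ℕ → ℕ → List Bool → Set (List ℕ))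
    (I : ℕ → Set (ℕ → ℕ)) : Prop :=
  (∀ n, (I n).Finite) ∧
  (∀ nn n : ℕ, ∀ s : List Bool, n ∈ η nn → s.length = nn →
    IsTree (F nn n s) ∧ Leafless (F nn n s) ∧ Obeys (F nn n s) (f (Φ s n))) ∧
  (∀ nn n : ℕ, n ∈ η nn → ∃ s : List Bool, s.length = nn ∧ X n ∈ Branches (F nn n s)) ∧
  (∀ nn n₁ n₂ : ℕ, ∀ s₁ s₂ : List Bool, η nn = {n₁, n₂} → n₁ ≠ n₂ →
    s₁.length = nn → s₂.length = nn →
    (Branches (F nn n₁ s₁) = Branches (F nn n₂ s₂) ∧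
      ((X n₁ ∈ Branches (F nn n₁ s₁) ∨ X n₂ ∈ Branches (F nn n₂ s₂)) → X n₁ = X n₂)) ∨
    (∃ x ∈ I n₁ ∩ I n₂, Branches (F nn n₁ s₁) = {x} ∧ Branches (F nn n₂ s₂) = {x}) ∨
    (Branches (F nn n₁ s₁) ∩ Branches (F nn n₂ s₂) = ∅))

theorem seg_prefix (x : ℕ → ℕ) {a b : ℕ} (h : a ≤ b) : seg x a <+: seg x b := by
  obtain ⟨c, rfl⟩ := Nat.exists_eq_add_of_le h
  unfold seg
  rw [List.range_add, List.map_append]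
  exact List.prefix_append _ _

theorem seg_congr (x y : ℕ → ℕ) (l : ℕ) (h : ∀ i < l, x i = y i) : seg x l = seg y l := by
  unfold seg
  apply List.map_congr_left
  intro i hi
  exact h i (List.mem_range.1 hi)

theorem agree_below (X : ℕ → ℕ → ℕ) (x : ℕ → ℕ) (n i : ℕ) (h : i < fSeq X x n) :
    x i = X n i := by
  by_contra hne
  exact Nat.notMem_of_lt_sInf h hne

theorem branch_of_finite (x : ℕ → ℕ) (nn : ℕ) (G : List Bool → Set (List ℕ))
    (hG : ∀ s : List Bool, s.length = nn → IsTree (G s))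
    (h : ∀ l, ∃ s : List Bool, s.length = nn ∧ seg x l ∈ G s) :
    ∃ s : List Bool, s.length = nn ∧ x ∈ Branches (G s) := by
  by_contra hcon
  push Not at hcon
  have h2 : ∀ s : List Bool, ∃ l, s.length = nn → seg x l ∉ G s := by
    intro s
    by_cases hs : s.length = nn
    · have := hcon s hs
      simp only [Branches, Set.mem_ofPred_eq, not_forall] at this
      obtain ⟨l, hl⟩ := this
      exact ⟨l, fun _ => hl⟩
    · exact ⟨0, fun h => absurd h hs⟩
  choose L hL using h2
  obtain ⟨M, hM⟩ := ((List.finite_length_eq Bool nn).image L).bddAbove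
  obtain ⟨s, hs, hmem⟩ := h M
  exact hL s hs (hG s hs _ hmem _ (seg_prefix x (hM ⟨s, hs, rfl⟩)))

/-- If `W = (F, I)` is a shrink wrapper for `X`, `T_n = ⋂ {⋃_{s ∈ 2^nn} F nn n s : n ∈ η nn}`,
and `e` bounds the separation levels of disjoint pairs of wrapped sets, then
`g(x)(n) = max(Exit(T_n)(x), e n, n)` pointwise eventually dominates `f_X`. -/
theorem shrink_wrapper_dominates
    (η : ℕ → Finset ℕ) (hηcard : ∀ nn, (η nn).card = 2)
    (hηbij : ∀ P : Finset ℕ, P.card = 2 → ∃! nn, η nn = P)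
    (f : ℕ → ℕ → ℕ) (hfpos : ∀ i l, 0 < f i l)
    (hffin : ∀ m : ℕ, {q : ℕ × ℕ | f q.1 q.2 = m}.Finite)
    (Φ : List Bool → ℕ → ℕ)
    (hΦfin : ∀ m : ℕ, {q : List Bool × ℕ | Φ q.1 q.2 = m}.Finite)
    (X : ℕ → ℕ → ℕ) (F : ℕ → ℕ → List Bool → Set (List ℕ)) (I : ℕ → Set (ℕ → ℕ))
    (hW : ShrinkWrapper η f Φ X F I)
    (T : ℕ → Set (List ℕ))
    (hT : ∀ n, T n =
      {t | ∀ nn : ℕ, n ∈ η nn → ∃ s : List Bool, s.length = nn ∧ t ∈ F nn n s})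
    (e : ℕ → ℕ)
    (he : ∀ nn n₁ n₂ : ℕ, ∀ s₁ s₂ : List Bool, n₁ < n₂ → η nn = {n₁, n₂} →
      s₁.length = nn → s₂.length = nn →
      Branches (F nn n₁ s₁) ∩ Branches (F nn n₂ s₂) = ∅ →
      ∀ y₁ ∈ Branches (F nn n₁ s₁), ∀ y₂ ∈ Branches (F nn n₂ s₂),
        ∃ i < e n₂, y₁ i ≠ y₂ i)
    (g : (ℕ → ℕ) → ℕ → ℕ)
    (hg : ∀ x n, g x n = max (exitLevel (T n) x) (max (e n) n)) :
    ∀ x : ℕ → ℕ, ∀ᶠ n in Filter.atTop, fSeq X x n ≤ g x n := by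
  intro x
  obtain ⟨-, h1, h2, h3⟩ := hW
  by_cases hex : ∃ n, g x n < fSeq X x n
  swap
  · push Not at hex
    exact Filter.Eventually.of_forall hex
  obtain ⟨m, hm⟩ := hex
  -- a bad index has `x` among the branches of the corresponding tree
  have key : ∀ n, g x n < fSeq X x n → x ∈ Branches (T n) := by
    intro n hn
    have hXT : X n ∈ Branches (T n) := by
      intro l
      rw [hT]
      intro nn hnn
      obtain ⟨s, hs, hb⟩ := h2 nn n hnn
      exact ⟨s, hs, hb l⟩
    by_contra hx
    have hne : {l | seg x l ∉ T n}.Nonempty := by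
      exact not_forall.1 hx
    have hmem : seg x (exitLevel (T n) x) ∉ T n := Nat.sInf_mem hne
    apply hmem
    rw [seg_congr x (X n)]
    · exact hXT _
    · intro i hi
      apply agree_below
      have := hg x n
      have := le_max_left (exitLevel (T n) x) (max (e n) n)
      omega
  filter_upwards [Filter.eventually_ge_atTop (max (m + 1) (fSeq X x m))] with n hn
  by_contra hbad
  push Not at hbad
  have hmn : m < n := lt_of_lt_of_le (Nat.lt_succ_self m) ((le_max_left _ _).trans hn)
  have hfn : fSeq X x m ≤ n := (le_max_right _ _).trans hn
  have hgn := hg x n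
  have hen : e n < fSeq X x n := by
    have : e n ≤ g x n := by rw [hgn]; exact (le_max_left _ _).trans (le_max_right _ _)
    omega
  have hnn' : n < fSeq X x n := by
    have : n ≤ g x n := by rw [hgn]; exact (le_max_right _ _).trans (le_max_right _ _)
    omega
  obtain ⟨nn, hη, -⟩ := hηbij {m, n} (Finset.card_pair hmn.ne)
  have hmη : m ∈ η nn := by rw [hη]; simp
  have hnη : n ∈ η nn := by rw [hη]; simp
  obtain ⟨s₁, hs₁, hb₁⟩ := branch_of_finite x nn (F nn m)
    (fun s hs => (h1 nn m s hmη hs).1) (by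
      intro l
      have := key m hm l
      rw [hT] at this
      exact this nn hmη)
  obtain ⟨s₂, hs₂, hb₂⟩ := h2 nn n hnη
  rcases h3 nn m n s₁ s₂ hη hmn.ne hs₁ hs₂ with ⟨-, hA⟩ | ⟨y, -, hy1, hy2⟩ | hC
  · have hXX := hA (Or.inr hb₂)
    have : fSeq X x m = fSeq X x n := by unfold fSeq; rw [hXX]
    omega
  · rw [hy1] at hb₁
    rw [hy2] at hb₂
    have hxe : X n = x := by
      rw [Set.mem_singleton_iff] at hb₁ hb₂
      rw [hb₁, hb₂]
    have : fSeq X x n = 0 := by unfold fSeq; rw [hxe]; simp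
    omega
  · obtain ⟨i, hi, hne⟩ := he nn m n s₁ s₂ hmn hη hs₁ hs₂ hC x hb₁ (X n) hb₂
    exact hne (agree_below X x n i (hi.trans hen))
end

section
/- Let ⟨f_i : i ∈ ω⟩ be functions f_i : ω → ω∖{0}, let ⟨(i_j, l_j) : j ∈ ω⟩ be an enumeration of ω × ω without repetition, let ⟨x_i : i ∈ ω⟩ be elements of ω^ω, and suppose h : ω → [ω]^{<ω} satisfies, for every j ∈ ω, |h(j)| ≤ f_{i_j}(l_j), h(j) ≠ ∅, and x_{i_j}(l_j) ∈ h(j). Then there exists a sequence of trees ⟨T_i : i ∈ ω⟩, T_i ⊆ ω^{<ω}, such that for every i ∈ ω, T_i is a leafless tree that obeys f_i and x_i ∈ [T_i]. -/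
/-- From a slalom `h` capturing `x_{i_j}(l_j)` along an enumeration `⟨(i_j, l_j) : j ∈ ω⟩`
of `ω × ω` without repetition, with `|h j| ≤ f_{i_j}(l_j)` and `h j ≠ ∅`, one obtains a
sequence of leafless trees `T_i` obeying `f_i` with `x_i ∈ [T_i]` for every `i`. -/
theorem slalom_to_trees (f : ℕ → ℕ → ℕ) (hfpos : ∀ i l, 0 < f i l)
    (e : ℕ → ℕ × ℕ) (he : Function.Bijective e)
    (x : ℕ → ℕ → ℕ) (h : ℕ → Finset ℕ)
    (hcard : ∀ j, (h j).card ≤ f (e j).1 (e j).2)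
    (hne : ∀ j, (h j).Nonempty)
    (hmem : ∀ j, x (e j).1 (e j).2 ∈ h j) :
    ∃ T : ℕ → Set (List ℕ), ∀ i, IsTree (T i) ∧ Leafless (T i) ∧
      Obeys (T i) (f i) ∧ x i ∈ Branches (T i) := by
  choose g hg using he.2
  have hcard' : ∀ i l, (h (g (i, l))).card ≤ f i l := fun i l => by
    have := hcard (g (i, l)); rwa [hg] at this
  have hmem' : ∀ i l, x i l ∈ h (g (i, l)) := fun i l => by
    have := hmem (g (i, l)); rwa [hg] at this
  refine ⟨fun i => {s | ∀ l (hl : l < s.length), s[l] ∈ h (g (i, l))}, fun i => ⟨?_, ?_, ?_, ?_⟩⟩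
  · rintro s hs t ⟨u, rfl⟩ l hl
    have := hs l (by simp; omega)
    rwa [List.getElem_append_left hl] at this
  · intro t ht
    refine ⟨x i t.length, fun l hl => ?_⟩
    by_cases h1 : l < t.length
    · rw [List.getElem_append_left h1]; exact ht l h1
    · have h2 : l = t.length := by simp at hl; omega
      subst h2
      simpa using hmem' i t.length
  · intro l
    refine ⟨h (g (i, l)), hcard' i l, ?_⟩
    rintro n ⟨t, -, rfl, ht⟩
    simpa using ht t.length (by simp)
  · intro l k hk
    simpa [seg] using hmem' i k
end
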